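/- arXiv:2003.00716 — 2 statements merged into one kernel-verified Lean document; each statement's English description precedes it below -/
import Mathlib

section
/- Two point-vortices on the sphere are relative equilibria (steady rotations): Let Γ₁, Γ₂ ∈ ℝ and let r₁, r₂ : ℝ → ℝ³ be differentiable curves solving the point-vortex equations on the sphere with N = 2, with ‖r₁(0)‖ = ‖r₂(0)‖ = 1 and r₁(t)·r₂(t) ≠ 1 for all t. Then r₁(t)·r₂(t) is constant in t, and for all t and i ∈ {1,2} one has ṙᵢ(t) = Ω × rᵢ(t), where Ω = −(Γ₁ r₁(0) + Γ₂ r₂(0)) / (2π (1 − r₁(0)·r₂(0))) is a constant vector; i.e., the motion is a steady rotation about the axis of the total linear momentum Γ₁r₁ + Γ₂r₂. -/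
/-!
For two vortices with positions `a`, `b`, the velocities are `a' = c Γ₁ (a × b)` and
`b' = c Γ₀ (b × a)`, with `c = 1 / (2π (1 - a·b))`. Both velocities are orthogonal to `a` and to
`b`, so `a·b` is conserved (`dot3_const`); by antisymmetry of the cross product, so is the
momentum `Γ₀ a + Γ₁ b` (`momentum_const`). Hence `Ω` may be evaluated with the positions at time
`t` instead of time `0`, and since `a × a = b × b = 0`, crossing it with either position gives the
velocity of that vortex.
-/

open scoped BigOperators

noncomputable def dot3 (a b : Fin 3 → ℝ) : ℝ := ∑ i, a i * b i

noncomputable def sphereRHS (N : ℕ) (Γ : Fin N → ℝ) (r : Fin N → Fin 3 → ℝ) (i : Fin N) :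
    Fin 3 → ℝ :=
  (1 / (2 * Real.pi)) •
    ∑ j ∈ Finset.univ.filter (fun j => j ≠ i),
      (Γ j / (1 - dot3 (r i) (r j))) • crossProduct (r i) (r j)

def IsPVSolutionSphere (N : ℕ) (Γ : Fin N → ℝ) (r : ℝ → Fin N → Fin 3 → ℝ) : Prop :=
  (∀ t : ℝ, ∀ i j : Fin N, i ≠ j → dot3 (r t i) (r t j) ≠ 1) ∧
  (∀ (t : ℝ) (i : Fin N), HasDerivAt (fun s => r s i) (sphereRHS N Γ (r t) i) t)

open Matrix

lemma sphereRHS_two_zero (Γ : Fin 2 → ℝ) (r : Fin 2 → Fin 3 → ℝ) :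
    sphereRHS 2 Γ r 0 =
      (1 / (2 * Real.pi * (1 - dot3 (r 0) (r 1))) * Γ 1) • crossProduct (r 0) (r 1) := by
  have h : (Finset.univ.filter (fun j : Fin 2 => j ≠ 0)) = {1} := by decide
  rw [sphereRHS, h, Finset.sum_singleton, smul_smul]
  congr 1
  rw [one_div, one_div, mul_inv (2 * Real.pi) (1 - _)]
  ring

lemma dot3_comm (a b : Fin 3 → ℝ) : dot3 a b = dot3 b a := by
  simp only [dot3, mul_comm]

lemma sphereRHS_two_one (Γ : Fin 2 → ℝ) (r : Fin 2 → Fin 3 → ℝ) :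
    sphereRHS 2 Γ r 1 =
      (1 / (2 * Real.pi * (1 - dot3 (r 0) (r 1))) * Γ 0) • crossProduct (r 1) (r 0) := by
  have h : (Finset.univ.filter (fun j : Fin 2 => j ≠ 1)) = {0} := by decide
  rw [sphereRHS, h, Finset.sum_singleton, smul_smul, dot3_comm (r 1)]
  congr 1
  rw [one_div, one_div, mul_inv (2 * Real.pi) (1 - _)]
  ring

lemma hasDerivAt_dot3 {f g : ℝ → Fin 3 → ℝ} {f' g' : Fin 3 → ℝ} {t : ℝ}
    (hf : HasDerivAt f f' t) (hg : HasDerivAt g g' t) :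
    HasDerivAt (fun s => dot3 (f s) (g s)) (dot3 f' (g t) + dot3 (f t) g') t := by
  have h := HasDerivAt.fun_sum (u := Finset.univ)
    fun i _ => ((hasDerivAt_pi.1 hf) i).fun_mul ((hasDerivAt_pi.1 hg) i)
  simpa only [dot3, ← Finset.sum_add_distrib] using h

lemma dot3_const {Γ : Fin 2 → ℝ} {r : ℝ → Fin 2 → Fin 3 → ℝ}
    (hsol : IsPVSolutionSphere 2 Γ r) (t : ℝ) :
    dot3 (r t 0) (r t 1) = dot3 (r 0 0) (r 0 1) := by
  have h : ∀ s, HasDerivAt (fun s => dot3 (r s 0) (r s 1)) 0 s := by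
    intro s
    refine (hasDerivAt_dot3 (hsol.2 s 0) (hsol.2 s 1)).congr_deriv ?_
    rw [sphereRHS_two_zero, sphereRHS_two_one]
    simp [dot3, cross_apply, Fin.sum_univ_three]
    ring
  exact is_const_of_deriv_eq_zero (fun s => (h s).differentiableAt) (fun s => (h s).deriv) t 0

lemma momentum_const {Γ : Fin 2 → ℝ} {r : ℝ → Fin 2 → Fin 3 → ℝ}
    (hsol : IsPVSolutionSphere 2 Γ r) (t : ℝ) :
    Γ 0 • r t 0 + Γ 1 • r t 1 = Γ 0 • r 0 0 + Γ 1 • r 0 1 := by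
  have h : ∀ s, HasDerivAt (fun s => Γ 0 • r s 0 + Γ 1 • r s 1) 0 s := by
    intro s
    refine (((hsol.2 s 0).fun_const_smul (Γ 0)).fun_add
      ((hsol.2 s 1).fun_const_smul (Γ 1))).congr_deriv ?_
    rw [sphereRHS_two_zero, sphereRHS_two_one, ← cross_anticomm (r s 0) (r s 1)]
    module
  exact is_const_of_deriv_eq_zero (fun s => (h s).differentiableAt) (fun s => (h s).deriv) t 0

theorem sphere_two_vortices_relative_equilibrium (Γ : Fin 2 → ℝ) (r : ℝ → Fin 2 → Fin 3 → ℝ)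
    (hsol : IsPVSolutionSphere 2 Γ r)
    (hunit : ∀ i : Fin 2, dot3 (r 0 i) (r 0 i) = 1)
    (Ω : Fin 3 → ℝ)
    (hΩ : Ω = (-(1 / (2 * Real.pi * (1 - dot3 (r 0 0) (r 0 1))))) •
        (Γ 0 • r 0 0 + Γ 1 • r 0 1)) :
    (∀ t : ℝ, dot3 (r t 0) (r t 1) = dot3 (r 0 0) (r 0 1)) ∧
    (∀ (t : ℝ) (i : Fin 2), HasDerivAt (fun s => r s i) (crossProduct Ω (r t i)) t) := by
  refine ⟨dot3_const hsol, fun t i => (hsol.2 t i).congr_deriv ?_⟩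
  rw [hΩ, ← dot3_const hsol t, ← momentum_const hsol t]
  fin_cases i
  · simp only [Fin.zero_eta, sphereRHS_two_zero, map_smul, map_add, LinearMap.smul_apply,
      LinearMap.add_apply, cross_self]
    rw [← cross_anticomm (r t 0) (r t 1)]
    module
  · simp only [Fin.mk_one, sphereRHS_two_one, map_smul, map_add, LinearMap.smul_apply,
      LinearMap.add_apply, cross_self]
    rw [← cross_anticomm (r t 0) (r t 1)]
    module
end

section
/- Two point-vortices on the hyperbolic plane are relative equilibria: Let Γ₁, Γ₂ ∈ ℝ and let r₁, r₂ : ℝ → ℝ³ be differentiable curves solving the point-vortex equations on the hyperbolic plane with N = 2, with (r₁(t)·_L r₂(t))² ≠ 1 for all t. Then r₁(t)·_L r₂(t) is constant in t, and for all t and i ∈ {1,2} one has ṙᵢ(t) = Ω ×_L rᵢ(t), where Ω = (Γ₁ r₁(0) + Γ₂ r₂(0)) / (π ((r₁(0) ·_L r₂(0))² − 1)) is a constant vector. -/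
/-!
Each velocity is a multiple of `r₀ ×_L r₁`, and `(a ×_L b) ·_L c` is the Euclidean triple product,
which vanishes when `c` is `a` or `b`. Hence `r₀ ·_L r₁` has zero derivative (`dotL_const`). Since
`×_L` is antisymmetric and `·_L` symmetric, the moment `Γ₀ r₀ + Γ₁ r₁` has zero derivative as well
(`moment_const`). So `Ω` may be computed at time `t` instead of time `0`, and then `Ω ×_L rᵢ` is the
right-hand side of the equations because `rᵢ ×_L rᵢ = 0`.
-/

open scoped BigOperators

/-- The Lorentzian pairing a ·_L b = -a₁b₁ - a₂b₂ + a₃b₃ on ℝ³, for L = diag(-1,-1,1). -/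
noncomputable def dotL (a b : Fin 3 → ℝ) : ℝ := -(a 0 * b 0) - a 1 * b 1 + a 2 * b 2

/-- The Lorentzian cross product a ×_L b = L (a × b), for L = diag(-1,-1,1). -/
noncomputable def crossL (a b : Fin 3 → ℝ) : Fin 3 → ℝ :=
  ![-(crossProduct a b 0), -(crossProduct a b 1), crossProduct a b 2]

noncomputable def hypRHS (N : ℕ) (Γ : Fin N → ℝ) (r : Fin N → Fin 3 → ℝ) (i : Fin N) :
    Fin 3 → ℝ :=
  (-(1 / Real.pi)) •
    ∑ j ∈ Finset.univ.filter (fun j => j ≠ i),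
      (Γ j / ((dotL (r i) (r j)) ^ 2 - 1)) • crossL (r i) (r j)

def IsPVSolutionHyp (N : ℕ) (Γ : Fin N → ℝ) (r : ℝ → Fin N → Fin 3 → ℝ) : Prop :=
  (∀ t : ℝ, ∀ i j : Fin N, i ≠ j → (dotL (r t i) (r t j)) ^ 2 ≠ 1) ∧
  (∀ (t : ℝ) (i : Fin N), HasDerivAt (fun s => r s i) (hypRHS N Γ (r t) i) t)

lemma hypRHS_two_zero (Γ : Fin 2 → ℝ) (x : Fin 2 → Fin 3 → ℝ) :
    hypRHS 2 Γ x 0 =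
      (-(1 / Real.pi)) • (Γ 1 / ((dotL (x 0) (x 1)) ^ 2 - 1)) • crossL (x 0) (x 1) := by
  have h : Finset.univ.filter (fun j : Fin 2 => j ≠ 0) = {1} := by decide
  rw [hypRHS, h, Finset.sum_singleton]

lemma dotL_comm (a b : Fin 3 → ℝ) : dotL a b = dotL b a := by
  unfold dotL
  ring

lemma crossL_anticomm (a b : Fin 3 → ℝ) : crossL a b = -crossL b a := by
  ext k
  fin_cases k <;> simp [crossL, cross_apply] <;> ring

lemma hypRHS_two_one (Γ : Fin 2 → ℝ) (x : Fin 2 → Fin 3 → ℝ) :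
    hypRHS 2 Γ x 1 =
      (1 / Real.pi) • (Γ 0 / ((dotL (x 0) (x 1)) ^ 2 - 1)) • crossL (x 0) (x 1) := by
  have h : Finset.univ.filter (fun j : Fin 2 => j ≠ 1) = {0} := by decide
  rw [hypRHS, h, Finset.sum_singleton, dotL_comm, crossL_anticomm, smul_neg, smul_neg, neg_smul,
    neg_neg]

lemma dotL_crossL_right (a b : Fin 3 → ℝ) : dotL (crossL a b) b = 0 := by
  simp [dotL, crossL, cross_apply]
  ring

lemma dotL_crossL_left (a b : Fin 3 → ℝ) : dotL a (crossL a b) = 0 := by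
  simp [dotL, crossL, cross_apply]
  ring

lemma dotL_smul_left (c : ℝ) (a b : Fin 3 → ℝ) : dotL (c • a) b = c * dotL a b := by
  simp [dotL]
  ring

lemma dotL_smul_right (c : ℝ) (a b : Fin 3 → ℝ) : dotL a (c • b) = c * dotL a b := by
  simp [dotL]
  ring

lemma hasDerivAt_dotL {u v : ℝ → Fin 3 → ℝ} {u' v' : Fin 3 → ℝ} {t : ℝ}
    (hu : HasDerivAt u u' t) (hv : HasDerivAt v v' t) :
    HasDerivAt (fun s => dotL (u s) (v s)) (dotL u' (v t) + dotL (u t) v') t := by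
  rw [hasDerivAt_pi] at hu hv
  have h := (((hu 0).mul (hv 0)).neg.sub ((hu 1).mul (hv 1))).add ((hu 2).mul (hv 2))
  refine h.congr_deriv ?_
  unfold dotL
  ring

lemma dotL_const {Γ : Fin 2 → ℝ} {r : ℝ → Fin 2 → Fin 3 → ℝ} (hsol : IsPVSolutionHyp 2 Γ r)
    (t : ℝ) : dotL (r t 0) (r t 1) = dotL (r 0 0) (r 0 1) := by
  have hd : ∀ s, HasDerivAt (fun s => dotL (r s 0) (r s 1)) 0 s := fun s => by
    refine (hasDerivAt_dotL (hsol.2 s 0) (hsol.2 s 1)).congr_deriv ?_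
    simp only [hypRHS_two_zero, hypRHS_two_one, dotL_smul_left, dotL_smul_right,
      dotL_crossL_left, dotL_crossL_right, mul_zero, add_zero]
  exact is_const_of_deriv_eq_zero (fun s => (hd s).differentiableAt) (fun s => (hd s).deriv) t 0

lemma moment_const {Γ : Fin 2 → ℝ} {r : ℝ → Fin 2 → Fin 3 → ℝ} (hsol : IsPVSolutionHyp 2 Γ r)
    (t : ℝ) : Γ 0 • r t 0 + Γ 1 • r t 1 = Γ 0 • r 0 0 + Γ 1 • r 0 1 := by
  have hd : ∀ s, HasDerivAt (fun s => Γ 0 • r s 0 + Γ 1 • r s 1) 0 s := fun s => by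
    refine (((hsol.2 s 0).const_smul (Γ 0)).add ((hsol.2 s 1).const_smul (Γ 1))).congr_deriv ?_
    rw [hypRHS_two_zero, hypRHS_two_one]
    module
  exact is_const_of_deriv_eq_zero (fun s => (hd s).differentiableAt) (fun s => (hd s).deriv) t 0

theorem hyp_two_vortices_relative_equilibrium (Γ : Fin 2 → ℝ) (r : ℝ → Fin 2 → Fin 3 → ℝ)
    (hsol : IsPVSolutionHyp 2 Γ r)
    (Ω : Fin 3 → ℝ)
    (hΩ : Ω = (1 / (Real.pi * ((dotL (r 0 0) (r 0 1)) ^ 2 - 1))) •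
        (Γ 0 • r 0 0 + Γ 1 • r 0 1)) :
    (∀ t : ℝ, dotL (r t 0) (r t 1) = dotL (r 0 0) (r 0 1)) ∧
    (∀ (t : ℝ) (i : Fin 2), HasDerivAt (fun s => r s i) (crossL Ω (r t i)) t) := by
  refine ⟨dotL_const hsol, fun t i => (hsol.2 t i).congr_deriv ?_⟩
  rw [hΩ, ← dotL_const hsol t, ← moment_const hsol t]
  -- The remaining identity is polynomial once `1 / (π (d² - 1))` is split as a product of inverses.
  fin_cases i
  · simp only [Fin.zero_eta, hypRHS_two_zero]
    ext k
    fin_cases k <;> simp [crossL, cross_apply, div_eq_mul_inv] <;> ring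
  · simp only [Fin.mk_one, hypRHS_two_one]
    ext k
    fin_cases k <;> simp [crossL, cross_apply, div_eq_mul_inv] <;> ring
end
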